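/- (Difference formula relating v-adic and ∞-adic multiple zeta values at negative integers.) Let r ≥ 1 and m_1,…,m_r ∈ ℤ_{≥0}. Then in A: ζ_v(−m_1,…,−m_r) − ζ_∞(−m_1,…,−m_r) = Σ_{l=0}^{r} (−1)^l · ζ_{<d}(−m_{l+1},…,−m_r) · [ Σ_{(a_1,…,a_l)} v^{a_1+⋯+a_l} · ζ_{<d}(−(m_1−a_1)) ⋯ ζ_{<d}(−(m_l−a_l)) · C(m_1,a_1) ⋯ C(m_l,a_l) · ζ_∞(−a_1,…,−a_l) ], where the inner sum runs over all integer tuples (a_1,…,a_l) with 0 ≤ a_j ≤ m_j, (q−1) | (m_j − a_j) for all 1 ≤ j ≤ l, and a_j = m_j for at least one j (in particular the l = 0 summand is 0). -/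

import Mathlib

/-!
Division with remainder by `v`, of degree `d`, writes each monic polynomial of degree `i + d`
uniquely as `v * b + c` with `b` monic of degree `i` and `deg c < d`. In the binomial expansion of
`(v * b + c) ^ m` the sums of `c ^ k` over all `c` of degree `< d` appear: they vanish unless
`k > 0` and `q - 1 ∣ k`, when they equal `-ζ_{<d}(-k)`. Hence
`S_{i+d}(-m) = -∑ v ^ a * C(m, a) * ζ_{<d}(-(m - a)) * S_i(-a)` over the `a < m` with
`q - 1 ∣ m - a`. Removing the multiples of `v` subtracts `v ^ m * S_i(-m)`, and since
`ζ_{<d}(0) = 1` this is exactly the missing term `a = m`: the restricted sum `S̃_{i+d}(-m)` is given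
by the same expression with `a ≤ m` instead of `a < m`.

Now split each chain `i_1 > ⋯ > i_r` at `d`. The indices below `d` contribute the same truncated
value to `ζ_v` and to `ζ_∞`, because `S̃_i = S_i` for `i < d`. The `l` indices `≥ d` contribute, by
multilinearity, a sum over tuples `a`, and the tuples which survive in the difference are those
with `a_j = m_j` for some `j`.
-/

open Polynomial

/-- The power sum `S_i(-m)`: the sum of `n ^ m` over monic polynomials `n` of degree `i`. -/
noncomputable def powerSum (F : Type*) [Field F] [Fintype F] (i m : ℕ) : Polynomial F :=
  ∑ᶠ n ∈ {n : Polynomial F | n.Monic ∧ n.natDegree = i}, n ^ m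

/-- The restricted power sum `S̃_i(-m)`: the sum of `n ^ m` over monic polynomials `n` of
degree `i` not divisible by `v`. -/
noncomputable def powerSumV (F : Type*) [Field F] [Fintype F] (v : Polynomial F) (i m : ℕ) :
    Polynomial F :=
  ∑ᶠ n ∈ {n : Polynomial F | n.Monic ∧ n.natDegree = i ∧ ¬ v ∣ n}, n ^ m

/-- `ζ_∞(-m_1, …, -m_r)`, the ∞-adic multiple zeta value at nonpositive integers:
the sum over `i_1 > ⋯ > i_r ≥ 0` of `S_{i_1}(-m_1) ⋯ S_{i_r}(-m_r)`.
Only `m 0, …, m (r-1)` are used.  The depth-0 value is `1`. -/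
noncomputable def zetaInf (F : Type*) [Field F] [Fintype F] (r : ℕ) (m : ℕ → ℕ) :
    Polynomial F :=
  ∑ᶠ i ∈ {i : Fin r → ℕ | StrictAnti i}, ∏ j : Fin r, powerSum F (i j) (m (j : ℕ))

/-- `ζ⋆_∞(-m_1, …, -m_r)`, the ∞-adic multiple zeta star value at nonpositive integers:
the sum over `i_1 ≥ ⋯ ≥ i_r ≥ 0` of `S_{i_1}(-m_1) ⋯ S_{i_r}(-m_r)`. -/
noncomputable def zetaInfStar (F : Type*) [Field F] [Fintype F] (r : ℕ) (m : ℕ → ℕ) :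
    Polynomial F :=
  ∑ᶠ i ∈ {i : Fin r → ℕ | Antitone i}, ∏ j : Fin r, powerSum F (i j) (m (j : ℕ))

/-- `ζ_v(-m_1, …, -m_r)`, the v-adic multiple zeta value at nonpositive integers. -/
noncomputable def zetaV (F : Type*) [Field F] [Fintype F] (v : Polynomial F) (r : ℕ)
    (m : ℕ → ℕ) : Polynomial F :=
  ∑ᶠ i ∈ {i : Fin r → ℕ | StrictAnti i}, ∏ j : Fin r, powerSumV F v (i j) (m (j : ℕ))

/-- `ζ⋆_v(-m_1, …, -m_r)`, the v-adic multiple zeta star value at nonpositive integers. -/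
noncomputable def zetaVStar (F : Type*) [Field F] [Fintype F] (v : Polynomial F) (r : ℕ)
    (m : ℕ → ℕ) : Polynomial F :=
  ∑ᶠ i ∈ {i : Fin r → ℕ | Antitone i}, ∏ j : Fin r, powerSumV F v (i j) (m (j : ℕ))

/-- `ζ_{<d}(-m_1, …, -m_r)`, the truncated multiple zeta value:
the sum over `d > i_1 > ⋯ > i_r ≥ 0` of `S_{i_1}(-m_1) ⋯ S_{i_r}(-m_r)`. -/
noncomputable def zetaLt (F : Type*) [Field F] [Fintype F] (d r : ℕ) (m : ℕ → ℕ) :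
    Polynomial F :=
  ∑ᶠ i ∈ {i : Fin r → ℕ | StrictAnti i ∧ ∀ j, i j < d},
    ∏ j : Fin r, powerSum F (i j) (m (j : ℕ))

/-- `ζ⋆_{<d}(-m_1, …, -m_r)`, the truncated multiple zeta star value. -/
noncomputable def zetaLtStar (F : Type*) [Field F] [Fintype F] (d r : ℕ) (m : ℕ → ℕ) :
    Polynomial F :=
  ∑ᶠ i ∈ {i : Fin r → ℕ | Antitone i ∧ ∀ j, i j < d},
    ∏ j : Fin r, powerSum F (i j) (m (j : ℕ))

/-- `ζ_{<d}(-m)`, the depth-one truncated zeta value `Σ_{d > i ≥ 0} S_i(-m)`. -/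
noncomputable def zetaLtOne (F : Type*) [Field F] [Fintype F] (d m : ℕ) : Polynomial F :=
  ∑ᶠ i ∈ {i : ℕ | i < d}, powerSum F i m

section StrictAntiSum

open Finset

/-- The chains `N > i_0 > ⋯ > i_{r-1} ≥ 0`, over which multiple zeta values are summed. -/
def strictAntiTuples (r N : ℕ) : Finset (Fin r → ℕ) :=
  {i ∈ Fintype.piFinset fun _ => range N | StrictAnti i}

lemma mem_strictAntiTuples {r N : ℕ} {i : Fin r → ℕ} :
    i ∈ strictAntiTuples r N ↔ StrictAnti i ∧ ∀ j, i j < N := by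
  simp [strictAntiTuples, and_comm]

lemma cons_mem_strictAntiTuples {r N k : ℕ} {i : Fin r → ℕ} :
    (Fin.cons k i : Fin (r + 1) → ℕ) ∈ strictAntiTuples (r + 1) N ↔
      k < N ∧ i ∈ strictAntiTuples r k := by
  simp only [mem_strictAntiTuples, Fin.forall_fin_succ, Fin.cons_zero, Fin.cons_succ]
  constructor
  · rintro ⟨hanti, hk, -⟩
    exact ⟨hk, fun a b hab => by simpa using hanti (Fin.succ_lt_succ_iff.2 hab),
      fun j => by simpa using hanti (Fin.succ_pos j)⟩
  · rintro ⟨hk, hanti, hi⟩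
    refine ⟨fun a b hab => ?_, hk, fun j => (hi j).trans hk⟩
    obtain ⟨b, rfl⟩ := Fin.exists_succ_eq.2 (Fin.ne_zero_of_lt hab)
    cases a using Fin.cases with
    | zero => simpa using hi b
    | succ a => simpa using hanti (Fin.succ_lt_succ_iff.1 hab)

/-- The sum over `N > i_0 > ⋯ > i_{r-1} ≥ 0` of `g 0 i_0 * ⋯ * g (r-1) i_{r-1}`, the common shape
of all the multiple zeta values. -/
def strictAntiSum {R : Type*} [CommSemiring R] {r : ℕ} (g : Fin r → ℕ → R) (N : ℕ) : R :=
  ∑ i ∈ strictAntiTuples r N, ∏ j, g j (i j)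

section CommSemiring

variable {R : Type*} [CommSemiring R]

lemma strictAntiSum_zero (g : Fin 0 → ℕ → R) (N : ℕ) : strictAntiSum g N = 1 := by
  have huniv : strictAntiTuples 0 N = univ :=
    eq_univ_of_forall fun i => mem_strictAntiTuples.2 ⟨Subsingleton.strictAnti i, finZeroElim⟩
  simp [strictAntiSum, huniv]

lemma strictAntiSum_succ {r : ℕ} (g : Fin (r + 1) → ℕ → R) (N : ℕ) :
    strictAntiSum g N = ∑ k ∈ range N, g 0 k * strictAntiSum (fun j => g j.succ) k := by
  simp only [strictAntiSum, mul_sum, sum_sigma']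
  refine sum_nbij' (fun i => ⟨i 0, Fin.tail i⟩) (fun p => Fin.cons p.1 p.2) ?_ ?_ ?_ ?_ ?_
  · intro i hi
    rw [← Fin.cons_self_tail i, cons_mem_strictAntiTuples] at hi
    exact mem_sigma.2 ⟨mem_range.2 hi.1, hi.2⟩
  · intro p hp
    rw [mem_sigma, mem_range] at hp
    exact cons_mem_strictAntiTuples.2 hp
  · simp
  · simp
  · intro i _
    exact Fin.prod_univ_succ _

lemma strictAntiSum_congr {r : ℕ} {g h : Fin r → ℕ → R} {N : ℕ}
    (hgh : ∀ j, ∀ i < N, g j i = h j i) : strictAntiSum g N = strictAntiSum h N :=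
  sum_congr rfl fun _ hi => prod_congr rfl fun j _ => hgh j _ ((mem_strictAntiTuples.1 hi).2 j)

lemma strictAntiSum_add (r : ℕ) (g : ℕ → ℕ → R) (N d : ℕ) :
    strictAntiSum (fun j : Fin r => g j) (N + d) =
      ∑ l ∈ range (r + 1), strictAntiSum (fun (j : Fin l) i => g j (i + d)) N *
        strictAntiSum (fun j : Fin (r - l) => g (l + j)) d := by
  induction r generalizing g N with
  | zero => simp [strictAntiSum_zero]
  | succ r ih =>
    have hge : ∑ k ∈ range N, g 0 (d + k) * strictAntiSum (fun j : Fin r => g (j + 1)) (d + k) =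
        ∑ l ∈ range (r + 1), strictAntiSum (fun (j : Fin (l + 1)) i => g j (i + d)) N *
          strictAntiSum (fun j : Fin (r - l) => g (l + 1 + j)) d := by
      simp_rw [strictAntiSum_succ _ N, sum_mul]
      rw [sum_comm]
      refine sum_congr rfl fun k _ => ?_
      rw [add_comm d k, ih fun j => g (j + 1), mul_sum]
      simp only [Fin.val_zero, Fin.val_succ, mul_assoc, add_right_comm]
    rw [sum_range_succ', strictAntiSum_zero, one_mul, strictAntiSum_succ, add_comm N d,
      sum_range_add, add_comm]
    simp only [Fin.val_zero, Fin.val_succ, hge, strictAntiSum_succ _ d, Nat.sub_zero, zero_add]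
    congr! 2 with l
    rw [Nat.add_sub_add_right]

lemma strictAntiSum_const_mul {r : ℕ} (c : Fin r → R) (g : Fin r → ℕ → R) (N : ℕ) :
    strictAntiSum (fun j i => c j * g j i) N = (∏ j, c j) * strictAntiSum g N := by
  simp only [strictAntiSum, prod_mul_distrib, mul_sum]

lemma strictAntiSum_sum {r : ℕ} {ι : Fin r → Type*} (s : ∀ j, Finset (ι j))
    (g : ∀ j, ι j → ℕ → R) (N : ℕ) :
    strictAntiSum (fun j i => ∑ a ∈ s j, g j a i) N =
      ∑ a ∈ Fintype.piFinset s, strictAntiSum (fun j => g j (a j)) N := by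
  simp only [strictAntiSum, prod_univ_sum]
  exact sum_comm

lemma finsum_mem_strictAnti_eq_strictAntiSum {r : ℕ} {g : Fin r → ℕ → R} {N : ℕ}
    (hg : ∀ j i, N ≤ i → g j i = 0) :
    ∑ᶠ i ∈ {i : Fin r → ℕ | StrictAnti i}, ∏ j, g j (i j) = strictAntiSum g N := by
  refine finsum_mem_eq_sum_of_inter_support_eq _ (Set.ext fun i => and_congr_left fun hi => ?_)
  refine ⟨fun hanti => mem_strictAntiTuples.2 ⟨hanti, fun j => ?_⟩,
    fun hi => (mem_strictAntiTuples.1 hi).1⟩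
  contrapose! hi
  exact Function.notMem_support.2 (prod_eq_zero (mem_univ j) (hg j _ hi))

end CommSemiring

lemma strictAntiSum_neg_sum_const_mul {R : Type*} [CommRing R] {r : ℕ} {ι : Fin r → Type*}
    (s : ∀ j, Finset (ι j)) (c : ∀ j, ι j → R) (g : ∀ j, ι j → ℕ → R) (N : ℕ) :
    strictAntiSum (fun j i => -∑ a ∈ s j, c j a * g j a i) N =
      (-1) ^ r * ∑ a ∈ Fintype.piFinset s,
        (∏ j, c j (a j)) * strictAntiSum (fun j => g j (a j)) N := by
  simp_rw [← neg_one_mul (Finset.sum _ _), strictAntiSum_const_mul, strictAntiSum_sum,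
    strictAntiSum_const_mul, prod_const, card_univ, Fintype.card_fin]

end StrictAntiSum

lemma finsum_mem_restrict_fin {α M : Type*} [Zero α] [AddCommMonoid M] {l : ℕ}
    (s : Set (Fin l → α)) (f : (Fin l → α) → M) :
    ∑ᶠ a ∈ {a : ℕ → α | (fun j : Fin l => a j) ∈ s ∧ ∀ j, l ≤ j → a j = 0},
      f (fun j => a j) = ∑ᶠ a ∈ s, f a := by
  refine finsum_mem_eq_of_bijOn (fun a j => a j) ⟨fun _ ha => ha.1, ?_, ?_⟩ fun _ _ => rfl
  · intro a ha b hb hab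
    ext j
    rcases lt_or_ge j l with hj | hj
    · exact congrFun hab ⟨j, hj⟩
    · rw [ha.2 j hj, hb.2 j hj]
  · intro a ha
    have hext : (fun j : Fin l => Function.extend Fin.val a 0 j) = a :=
      funext fun j => Fin.val_injective.extend_apply a 0 j
    refine ⟨Function.extend Fin.val a 0, ⟨hext.symm ▸ ha, fun j hj => ?_⟩, hext⟩
    exact Function.extend_apply' _ _ _ fun ⟨i, hi⟩ => (i.2.trans_le hj).ne hi

section FinitePolynomialSets

open Finset

lemma finite_degreeLT (R : Type*) [Semiring R] [Finite R] (d : ℕ) :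
    (degreeLT R d : Set R[X]).Finite :=
  Finite.of_equiv _ (degreeLTEquiv R d).toEquiv.symm

lemma finite_setOf_monic_natDegree_eq (R : Type*) [Semiring R] [Finite R] (i : ℕ) :
    {n : R[X] | n.Monic ∧ n.natDegree = i}.Finite := by
  refine (finite_degreeLT R (i + 1)).subset ?_
  rintro n ⟨-, rfl⟩
  exact mem_degreeLT.2 (degree_le_natDegree.trans_lt (mod_cast Nat.lt_succ_self _))

/-- The polynomials of degree less than `d`, i.e. the remainders modulo a monic polynomial of
degree `d`, as a `Finset` to sum over. -/
noncomputable def polysLT (R : Type*) [Semiring R] [Finite R] (d : ℕ) : Finset R[X] :=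
  (finite_degreeLT R d).toFinset

/-- The monic polynomials of degree `i`, as a `Finset` to sum over. -/
noncomputable def monics (R : Type*) [Semiring R] [Finite R] (i : ℕ) : Finset R[X] :=
  (finite_setOf_monic_natDegree_eq R i).toFinset

section Semiring

variable {R : Type*} [Semiring R] [Finite R]

lemma mem_polysLT {d : ℕ} {n : R[X]} : n ∈ polysLT R d ↔ n.degree < d := by
  simp [polysLT, mem_degreeLT]

lemma mem_monics {i : ℕ} {n : R[X]} : n ∈ monics R i ↔ n.Monic ∧ n.natDegree = i := by
  simp [monics]

lemma monics_zero : monics R 0 = {1} := by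
  ext n
  rw [mem_monics, mem_singleton]
  exact ⟨fun hn => hn.1.natDegree_eq_zero.1 hn.2, fun hn => by simp [hn]⟩

lemma card_polysLT (d : ℕ) : (polysLT R d).card = Nat.card R ^ d := by
  rw [polysLT, ← Set.ncard_eq_toFinset_card _ (finite_degreeLT R d), ← Nat.card_coe_set_eq]
  simpa [Nat.card_fun] using Nat.card_congr (degreeLTEquiv R d).toEquiv

end Semiring

lemma natCast_card_polysLT {R : Type*} [Ring R] [Finite R] {d : ℕ} (hd : d ≠ 0) :
    ((polysLT R d).card : R[X]) = 0 := by
  cases nonempty_fintype R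
  rw [card_polysLT, Nat.card_eq_fintype_card, Nat.cast_pow, ← C_eq_natCast,
    Nat.cast_card_eq_zero, C_0, zero_pow hd]

lemma sum_monics_add_natDegree {R M : Type*} [CommRing R] [Nontrivial R] [Finite R]
    [AddCommMonoid M] {v : R[X]} (hv : v.Monic) (i : ℕ) (f : R[X] → M) :
    ∑ n ∈ monics R (i + v.natDegree), f n =
      ∑ b ∈ monics R i, ∑ c ∈ polysLT R v.natDegree, f (v * b + c) := by
  rw [← sum_product']
  symm
  have hdeg {c : R[X]} (hc : c ∈ polysLT R v.natDegree) : c.degree < v.degree := by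
    rwa [degree_eq_natDegree hv.ne_zero, ← mem_polysLT]
  refine sum_nbij' (fun p => v * p.1 + p.2) (fun n => (n /ₘ v, n %ₘ v)) ?_ ?_ ?_ ?_ fun _ _ => rfl
  · rintro ⟨b, c⟩ hbc
    obtain ⟨hb, hc⟩ := mem_product.1 hbc
    obtain ⟨hbm, rfl⟩ := mem_monics.1 hb
    have hlt : c.degree < (v * b).degree := by
      rw [hbm.degree_mul, degree_eq_natDegree hbm.ne_zero]
      exact (hdeg hc).trans_le (le_add_of_nonneg_right (Nat.cast_nonneg _))
    rw [mem_monics, natDegree_add_eq_left_of_degree_lt hlt, hv.natDegree_mul hbm,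
      add_comm v.natDegree]
    exact ⟨(hv.mul hbm).add_of_left hlt, rfl⟩
  · intro n hn
    obtain ⟨hn, hni⟩ := mem_monics.1 hn
    have hle : v.degree ≤ n.degree := by
      rw [degree_eq_natDegree hv.ne_zero, degree_eq_natDegree hn.ne_zero, hni]
      exact_mod_cast Nat.le_add_left _ _
    rw [mem_product, mem_monics, mem_polysLT, natDegree_divByMonic n hv, hni,
      ← degree_eq_natDegree hv.ne_zero]
    exact ⟨⟨(leadingCoeff_divByMonic_of_monic hv hle).trans hn, Nat.add_sub_cancel _ _⟩,
      degree_modByMonic_lt n hv⟩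
  · rintro ⟨b, c⟩ hbc
    obtain ⟨hdiv, hmod⟩ :=
      div_modByMonic_unique b c hv ⟨add_comm _ _, hdeg (mem_product.1 hbc).2⟩
    exact Prod.ext hdiv hmod
  · intro n _
    exact (add_comm _ _).trans (modByMonic_add_div n v)

lemma sum_monics_add_natDegree_filter_dvd {R M : Type*} [CommRing R] [Finite R] [AddCommMonoid M]
    {v : R[X]} [DecidablePred (v ∣ ·)] (hv : v.Monic) (i : ℕ) (f : R[X] → M) :
    ∑ n ∈ monics R (i + v.natDegree) with v ∣ n, f n = ∑ b ∈ monics R i, f (v * b) := by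
  symm
  refine sum_bij (fun b _ => v * b) ?_ ?_ ?_ fun _ _ => rfl
  · intro b hb
    obtain ⟨hbm, rfl⟩ := mem_monics.1 hb
    rw [mem_filter, mem_monics, hv.natDegree_mul hbm, add_comm]
    exact ⟨⟨hv.mul hbm, rfl⟩, dvd_mul_right v b⟩
  · exact fun _ _ _ _ h => hv.isRegular.left h
  · intro n hn
    rw [mem_filter, mem_monics] at hn
    obtain ⟨⟨hn, hdeg⟩, b, rfl⟩ := hn
    have hb := hv.of_mul_monic_left hn
    rw [hv.natDegree_mul hb, add_comm] at hdeg
    exact ⟨b, mem_monics.2 ⟨hb, Nat.add_right_cancel hdeg⟩, rfl⟩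

lemma sum_polysLT_erase_zero {F M : Type*} [Field F] [Fintype F] [DecidableEq F] [AddCommMonoid M]
    (d : ℕ) (f : F[X] → M) :
    ∑ c ∈ (polysLT F d).erase 0, f c =
      ∑ i ∈ range d, ∑ n ∈ monics F i, ∑ u : Fˣ, f (C (u : F) * n) := by
  simp_rw [← sum_product', sum_sigma']
  symm
  refine sum_bij (fun p _ => C (p.2.2 : F) * p.2.1) ?_ ?_ ?_ fun _ _ => rfl
  · rintro ⟨i, n, u⟩ hp
    simp only [mem_sigma, mem_range, mem_product, mem_univ, and_true, mem_monics] at hp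
    obtain ⟨hi, hn, rfl⟩ := hp
    rw [mem_erase, mem_polysLT, degree_C_mul u.ne_zero, ← natDegree_lt_iff_degree_lt hn.ne_zero]
    exact ⟨mul_ne_zero (C_ne_zero.2 u.ne_zero) hn.ne_zero, hi⟩
  · rintro ⟨i, n, u⟩ hp ⟨i', n', u'⟩ hp' h
    simp only [mem_sigma, mem_product, mem_univ, and_true, mem_monics] at hp hp' h
    obtain ⟨-, hn, rfl⟩ := hp
    obtain ⟨-, hn', rfl⟩ := hp'
    obtain rfl : u = u' := Units.ext <| by
      simpa [hn.leadingCoeff, hn'.leadingCoeff] using congrArg leadingCoeff h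
    obtain rfl : n = n' := mul_left_cancel₀ (C_ne_zero.2 u.ne_zero) h
    rfl
  · intro c hc
    rw [mem_erase, mem_polysLT] at hc
    obtain ⟨hc, hdeg⟩ := hc
    have hlead : c.leadingCoeff ≠ 0 := leadingCoeff_ne_zero.2 hc
    refine ⟨⟨c.natDegree, c * C c.leadingCoeff⁻¹, Units.mk0 _ hlead⟩, ?_, ?_⟩
    · simp only [mem_sigma, mem_range, mem_product, mem_univ, and_true, mem_monics]
      exact ⟨(natDegree_lt_iff_degree_lt hc).2 hdeg, monic_mul_leadingCoeff_inv hc,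
        natDegree_mul_C (inv_ne_zero hlead)⟩
    · rw [Units.val_mk0, mul_left_comm, ← C_mul, mul_inv_cancel₀ hlead, C_1, mul_one]

end FinitePolynomialSets

section ShiftExponents

open Finset

variable {F : Type*} [Fintype F]

/-- The exponents `a ≤ m` for which `S_i(-a)` occurs in the expansion of `S̃_{i+d}(-m)`. -/
def shiftExponents (F : Type*) [Fintype F] (m : ℕ) : Finset ℕ :=
  {a ∈ range (m + 1) | Fintype.card F - 1 ∣ m - a}

lemma mem_shiftExponents {a m : ℕ} :
    a ∈ shiftExponents F m ↔ a ≤ m ∧ Fintype.card F - 1 ∣ m - a := by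
  simp [shiftExponents]

lemma self_mem_shiftExponents (m : ℕ) : m ∈ shiftExponents F m :=
  mem_shiftExponents.2 ⟨le_rfl, by simp⟩

/-- The tuples `(a_1, …, a_l)` of exponents of the difference formula. -/
def exceptionalTuples (F : Type*) [Fintype F] {l : ℕ} (m : Fin l → ℕ) : Finset (Fin l → ℕ) :=
  {a ∈ Fintype.piFinset fun j => shiftExponents F (m j) | ∃ j, a j = m j}

lemma mem_exceptionalTuples {l : ℕ} {m a : Fin l → ℕ} :
    a ∈ exceptionalTuples F m ↔
      (∀ j, a j ≤ m j ∧ Fintype.card F - 1 ∣ m j - a j) ∧ ∃ j, a j = m j := by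
  simp [exceptionalTuples, mem_shiftExponents]

lemma piFinset_shiftExponents_sdiff_piFinset_erase {l : ℕ} (m : Fin l → ℕ) :
    (Fintype.piFinset fun j => shiftExponents F (m j)) \
        (Fintype.piFinset fun j => (shiftExponents F (m j)).erase (m j)) =
      exceptionalTuples F m := by
  ext a
  simp only [exceptionalTuples, mem_sdiff, mem_filter, Fintype.mem_piFinset, mem_erase]
  grind

end ShiftExponents

section PowerSum

open Finset

variable {F : Type*} [Field F] [Fintype F]

lemma powerSum_eq_sum_monics (i m : ℕ) : powerSum F i m = ∑ n ∈ monics F i, n ^ m :=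
  finsum_mem_eq_finite_toFinset_sum _ _

open Classical in
lemma powerSumV_eq_sum_monics (v : F[X]) (i m : ℕ) :
    powerSumV F v i m = ∑ n ∈ monics F i with ¬ v ∣ n, n ^ m := by
  rw [powerSumV, ← finsum_mem_coe_finset]
  simp only [coe_filter, mem_monics, and_assoc]

lemma zetaLtOne_eq_sum_range (d m : ℕ) : zetaLtOne F d m = ∑ i ∈ range d, powerSum F i m := by
  rw [zetaLtOne, ← finsum_mem_coe_finset]
  simp only [coe_range, Set.Iio]

lemma sum_polysLT_pow {k : ℕ} (d : ℕ) (hk : k ≠ 0) :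
    ∑ c ∈ polysLT F d, c ^ k =
      if Fintype.card F - 1 ∣ k then -zetaLtOne F d k else 0 := by
  classical
  rw [← sum_erase (a := 0) _ (zero_pow hk), sum_polysLT_erase_zero]
  simp_rw [mul_pow, ← C_pow, ← sum_mul, ← map_sum, FiniteField.sum_pow_units, ← mul_sum,
    ← powerSum_eq_sum_monics]
  rw [← zetaLtOne_eq_sum_range]
  split_ifs <;> simp

lemma powerSum_add_natDegree_eq_sum_range {v : F[X]} (hv : v.Monic) (i m : ℕ) :
    powerSum F (i + v.natDegree) m = ∑ a ∈ range (m + 1),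
      v ^ a * ((∑ c ∈ polysLT F v.natDegree, c ^ (m - a)) * m.choose a) * powerSum F i a := by
  calc powerSum F (i + v.natDegree) m
      = ∑ b ∈ monics F i, ∑ c ∈ polysLT F v.natDegree, ∑ a ∈ range (m + 1),
          v ^ a * (c ^ (m - a) * m.choose a) * b ^ a := by
        rw [powerSum_eq_sum_monics, sum_monics_add_natDegree hv]
        simp_rw [add_pow]
        refine sum_congr rfl fun b _ => sum_congr rfl fun c _ => sum_congr rfl fun a _ => ?_
        ring
    _ = ∑ a ∈ range (m + 1), ∑ b ∈ monics F i, ∑ c ∈ polysLT F v.natDegree,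
          v ^ a * (c ^ (m - a) * m.choose a) * b ^ a := by
        simp_rw [sum_comm (t := range (m + 1))]
    _ = _ := by
        simp_rw [powerSum_eq_sum_monics, sum_mul, mul_sum, sum_mul]

/-- The coefficient of `-S_i(-a)` in the expansion of `S̃_{i+d}(-m)`. -/
noncomputable def shiftCoeff (v : F[X]) (m a : ℕ) : F[X] :=
  v ^ a * (zetaLtOne F v.natDegree (m - a) * m.choose a)

lemma powerSum_add_natDegree {v : F[X]} (hv : v.Monic) (hd : v.natDegree ≠ 0) (i m : ℕ) :
    powerSum F (i + v.natDegree) m =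
      -∑ a ∈ (shiftExponents F m).erase m, shiftCoeff v m a * powerSum F i a := by
  have herase : (shiftExponents F m).erase m =
      {a ∈ range m | Fintype.card F - 1 ∣ m - a} := by
    ext a
    rw [mem_erase, mem_shiftExponents, mem_filter, mem_range, ← and_assoc, lt_iff_le_and_ne,
      and_comm (a := a ≠ m)]
  rw [powerSum_add_natDegree_eq_sum_range hv, sum_range_succ, herase, sum_filter, ← sum_neg_distrib]
  simp only [Nat.sub_self, pow_zero, sum_const, nsmul_one, natCast_card_polysLT hd, zero_mul,
    mul_zero, add_zero]
  refine sum_congr rfl fun a ha => ?_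
  rw [sum_polysLT_pow _ (Nat.sub_ne_zero_of_lt (mem_range.1 ha)), shiftCoeff]
  split_ifs <;> simp

lemma powerSum_eq_zero_of_lt {i m : ℕ} (h : m < i) : powerSum F i m = 0 := by
  induction m using Nat.strong_induction_on generalizing i with
  | _ m ih =>
    obtain ⟨i, rfl⟩ := Nat.exists_eq_add_of_lt h
    -- Shifting by `v = X` expresses `S_{i+1}(-m)` through the `S_i(-a)` with `a < m`.
    have hshift := powerSum_add_natDegree (F := F) monic_X (by simp) (m + i) m
    rw [natDegree_X] at hshift
    rw [hshift, neg_eq_zero]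
    refine sum_eq_zero fun a ha => ?_
    obtain ⟨hne, ha⟩ := mem_erase.1 ha
    have hlt : a < m := (mem_shiftExponents.1 ha).1.lt_of_ne hne
    rw [ih a hlt (by lia), mul_zero]

lemma zetaLtOne_zero_right {d : ℕ} (hd : d ≠ 0) : zetaLtOne F d 0 = 1 := by
  rw [zetaLtOne_eq_sum_range, sum_eq_single_of_mem 0 (mem_range.2 (Nat.pos_of_ne_zero hd))
    fun i _ hi => powerSum_eq_zero_of_lt (Nat.pos_of_ne_zero hi)]
  simp [powerSum_eq_sum_monics, monics_zero]

lemma shiftCoeff_self {v : F[X]} (hd : v.natDegree ≠ 0) (m : ℕ) : shiftCoeff v m m = v ^ m := by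
  simp [shiftCoeff, zetaLtOne_zero_right hd]

lemma powerSumV_add_natDegree_eq_sub {v : F[X]} (hv : v.Monic) (i m : ℕ) :
    powerSumV F v (i + v.natDegree) m =
      powerSum F (i + v.natDegree) m - v ^ m * powerSum F i m := by
  classical
  have hdvd : ∑ n ∈ monics F (i + v.natDegree) with v ∣ n, n ^ m = v ^ m * powerSum F i m := by
    rw [sum_monics_add_natDegree_filter_dvd hv, powerSum_eq_sum_monics, mul_sum]
    simp_rw [mul_pow]
  rw [powerSumV_eq_sum_monics, powerSum_eq_sum_monics, ← hdvd, eq_sub_iff_add_eq,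
    sum_filter_not_add_sum_filter]

lemma powerSumV_add_natDegree {v : F[X]} (hv : v.Monic) (hd : v.natDegree ≠ 0) (i m : ℕ) :
    powerSumV F v (i + v.natDegree) m =
      -∑ a ∈ shiftExponents F m, shiftCoeff v m a * powerSum F i a := by
  rw [powerSumV_add_natDegree_eq_sub hv, powerSum_add_natDegree hv hd,
    ← add_sum_erase _ _ (self_mem_shiftExponents m), shiftCoeff_self hd]
  ring

lemma powerSumV_eq_powerSum_of_lt {v : F[X]} {i : ℕ} (hi : i < v.natDegree) (m : ℕ) :
    powerSumV F v i m = powerSum F i m := by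
  classical
  rw [powerSumV_eq_sum_monics, powerSum_eq_sum_monics, filter_true_of_mem]
  intro n hn
  obtain ⟨hnm, rfl⟩ := mem_monics.1 hn
  exact fun hdvd => (natDegree_le_of_dvd hdvd hnm.ne_zero).not_gt hi

lemma powerSumV_eq_zero_of_lt {v : F[X]} (hv : v.Monic) {i m : ℕ} (h : m + v.natDegree < i) :
    powerSumV F v i m = 0 := by
  obtain ⟨i, rfl⟩ := Nat.exists_eq_add_of_le' ((Nat.le_add_left _ m).trans h.le)
  rw [powerSumV_add_natDegree_eq_sub hv, powerSum_eq_zero_of_lt (by lia),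
    powerSum_eq_zero_of_lt (by lia), mul_zero, sub_zero]

end PowerSum

section Zeta

open Finset

variable {F : Type*} [Field F] [Fintype F]

lemma zetaInf_eq_strictAntiSum {r N : ℕ} {m : ℕ → ℕ} (hm : ∀ j < r, m j < N) :
    zetaInf F r m = strictAntiSum (fun (j : Fin r) i => powerSum F i (m j)) N :=
  finsum_mem_strictAnti_eq_strictAntiSum fun j _ hi =>
    powerSum_eq_zero_of_lt ((hm j j.2).trans_le hi)

lemma zetaV_eq_strictAntiSum {v : F[X]} (hv : v.Monic) {r N : ℕ} {m : ℕ → ℕ}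
    (hm : ∀ j < r, m j < N) :
    zetaV F v r m =
      strictAntiSum (fun (j : Fin r) i => powerSumV F v i (m j)) (N + v.natDegree) :=
  finsum_mem_strictAnti_eq_strictAntiSum fun j _ hi =>
    powerSumV_eq_zero_of_lt hv ((Nat.add_lt_add_right (hm j j.2) _).trans_le hi)

lemma zetaLt_eq_strictAntiSum (d r : ℕ) (m : ℕ → ℕ) :
    zetaLt F d r m = strictAntiSum (fun (j : Fin r) i => powerSum F i (m j)) d := by
  rw [zetaLt, strictAntiSum, ← finsum_mem_coe_finset]
  simp only [SetLike.mem_coe, mem_strictAntiTuples, Set.mem_ofPred_eq]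

lemma strictAntiSum_powerSumV_sub_powerSum {v : F[X]} (hv : v.Monic) (hd : v.natDegree ≠ 0)
    {l : ℕ} (m : Fin l → ℕ) (N : ℕ) :
    strictAntiSum (fun j i => powerSumV F v (i + v.natDegree) (m j)) N -
        strictAntiSum (fun j i => powerSum F (i + v.natDegree) (m j)) N =
      (-1) ^ l * ∑ a ∈ exceptionalTuples F m,
        (∏ j, shiftCoeff v (m j) (a j)) * strictAntiSum (fun j i => powerSum F i (a j)) N := by
  simp_rw [powerSumV_add_natDegree hv hd, powerSum_add_natDegree hv hd]
  rw [strictAntiSum_neg_sum_const_mul _ _ fun _ a i => powerSum F i a,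
    strictAntiSum_neg_sum_const_mul _ _ fun _ a i => powerSum F i a, ← mul_sub,
    ← piFinset_shiftExponents_sdiff_piFinset_erase, sum_sdiff_eq_sub]
  exact Fintype.piFinset_subset _ _ fun j => erase_subset _ _

lemma finsum_mem_shiftCoeff_mul_zetaInf (v : F[X]) {l N : ℕ} {m : ℕ → ℕ}
    (hm : ∀ j < l, m j < N) :
    ∑ᶠ a ∈ {a : ℕ → ℕ |
        (∀ j < l, a j ≤ m j ∧ (Fintype.card F - 1) ∣ (m j - a j)) ∧
          (∃ j < l, a j = m j) ∧ ∀ j, l ≤ j → a j = 0},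
      v ^ (∑ j ∈ range l, a j) *
        (∏ j ∈ range l, zetaLtOne F v.natDegree (m j - a j) * ((m j).choose (a j) : F[X])) *
        zetaInf F l a =
      ∑ a ∈ exceptionalTuples F fun j : Fin l => m j,
        (∏ j : Fin l, shiftCoeff v (m j) (a j)) *
          strictAntiSum (fun j i => powerSum F i (a j)) N := by
  rw [← finsum_mem_coe_finset, ← finsum_mem_restrict_fin]
  refine finsum_mem_congr (Set.ext fun a => ?_) fun a ha => ?_
  · simp [mem_exceptionalTuples, Fin.forall_iff, Fin.exists_iff, and_assoc]
  · have haN : ∀ j < l, a j < N := fun j hj =>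
      ((mem_exceptionalTuples.1 ha.1).1 ⟨j, hj⟩).1.trans_lt (hm j hj)
    rw [zetaInf_eq_strictAntiSum haN, ← prod_pow_eq_pow_sum, ← prod_mul_distrib, prod_range]
    rfl

end Zeta

theorem zetaV_sub_zetaInf_general (F : Type*) [Field F] [Fintype F] (v : Polynomial F)
    (hv : v.Monic) (hd : 0 < v.natDegree) (r : ℕ) (m : ℕ → ℕ) :
    zetaV F v r m - zetaInf F r m =
      ∑ l ∈ Finset.range (r + 1),
        (-1 : Polynomial F) ^ l * zetaLt F v.natDegree (r - l) (fun j => m (l + j)) *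
          ∑ᶠ a ∈ {a : ℕ → ℕ |
              (∀ j < l, a j ≤ m j ∧ (Fintype.card F - 1) ∣ (m j - a j)) ∧
                (∃ j < l, a j = m j) ∧ ∀ j, l ≤ j → a j = 0},
            v ^ (∑ j ∈ Finset.range l, a j) *
              (∏ j ∈ Finset.range l,
                zetaLtOne F v.natDegree (m j - a j) * (Nat.choose (m j) (a j) : Polynomial F)) *
              zetaInf F l a := by
  obtain ⟨N, hN⟩ : ∃ N, ∀ j < r, m j < N :=
    ⟨(Finset.range r).sup m + 1, fun j hj =>
      Nat.lt_succ_of_le (Finset.le_sup (Finset.mem_range.2 hj))⟩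
  rw [zetaV_eq_strictAntiSum hv hN,
    zetaInf_eq_strictAntiSum fun j hj => (hN j hj).trans_le (Nat.le_add_right N v.natDegree),
    strictAntiSum_add r (fun j i => powerSumV F v i (m j)),
    strictAntiSum_add r (fun j i => powerSum F i (m j)), ← Finset.sum_sub_distrib]
  refine Finset.sum_congr rfl fun l hl => ?_
  have hlr : l ≤ r := Nat.lt_succ_iff.1 (Finset.mem_range.1 hl)
  have hlow : strictAntiSum (fun (j : Fin (r - l)) i => powerSumV F v i (m (l + j))) v.natDegree =
      zetaLt F v.natDegree (r - l) fun j => m (l + j) := by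
    rw [zetaLt_eq_strictAntiSum]
    exact strictAntiSum_congr fun j i hi => powerSumV_eq_powerSum_of_lt hi _
  rw [hlow, ← zetaLt_eq_strictAntiSum _ _ fun j => m (l + j), ← sub_mul,
    strictAntiSum_powerSumV_sub_powerSum hv hd.ne' (fun j : Fin l => m j),
    finsum_mem_shiftCoeff_mul_zetaInf v fun j hj => hN j (hj.trans_le hlr), mul_right_comm]

/-- Difference formula relating v-adic and ∞-adic multiple zeta values at negative
integers.  The inner sum runs over tuples `(a_1, …, a_l)` (encoded as functions
`a : ℕ → ℕ` vanishing from index `l` on) with `0 ≤ a_j ≤ m_j`, `(q-1) ∣ (m_j - a_j)`,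
and `a_j = m_j` for at least one `j`; in particular the `l = 0` summand is `0`. -/
theorem zetaV_sub_zetaInf (F : Type*) [Field F] [Fintype F] (v : Polynomial F)
    (hv : v.Monic) (hvirr : Irreducible v) (hd : 0 < v.natDegree) (r : ℕ) (hr : 1 ≤ r)
    (m : ℕ → ℕ) :
    zetaV F v r m - zetaInf F r m =
      ∑ l ∈ Finset.range (r + 1),
        (-1 : Polynomial F) ^ l * zetaLt F v.natDegree (r - l) (fun j => m (l + j)) *
          ∑ᶠ a ∈ {a : ℕ → ℕ |
              (∀ j < l, a j ≤ m j ∧ (Fintype.card F - 1) ∣ (m j - a j)) ∧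
                (∃ j < l, a j = m j) ∧ ∀ j, l ≤ j → a j = 0},
            v ^ (∑ j ∈ Finset.range l, a j) *
              (∏ j ∈ Finset.range l,
                zetaLtOne F v.natDegree (m j - a j) * (Nat.choose (m j) (a j) : Polynomial F)) *
              zetaInf F l a :=
  zetaV_sub_zetaInf_general F v hv hd r m
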